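/- Fix ℓ ≤ k and items i, j with u_i > u_j. Let R_{i\j} be the set of length-k rankings with i but not j among the top ℓ positions, and for r ∈ R_{i\j} let r_{i→j} denote r with item i replaced by item j. Then, summing over consideration sets C containing both i and j, Σ_{r∈R_{i\j}} Σ_{C: i,j∈C} Pr_C(C)·Pr_PL(r | C) > Σ_{r∈R_{i\j}} Σ_{C: i,j∈C} Pr_C(C)·Pr_PL(r_{i→j} | C). -/

import Mathlib

open scoped Classical
open Finset

noncomputable section

/-- Weight of a consideration set `C`: each item in `C` is considered (prob `p i`),
each item outside is not considered (prob `1 - p j`). -/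
def considerWeight (n : ℕ) (p : Fin n → ℝ) (C : Finset (Fin n)) : ℝ :=
  (∏ i ∈ C, p i) * ∏ j ∈ Cᶜ, (1 - p j)

/-- Normalizing constant `z_{k,p}`: total weight of consideration sets of size at least `k`. -/
def zConst (n k : ℕ) (p : Fin n → ℝ) : ℝ :=
  ∑ C ∈ Finset.univ.filter (fun C : Finset (Fin n) => k ≤ C.card), considerWeight n p C

/-- Probability of consideration set `C` (conditioned on `|C| ≥ k`). -/
def prC (n k : ℕ) (p : Fin n → ℝ) (C : Finset (Fin n)) : ℝ :=
  if k ≤ C.card then considerWeight n p C / zConst n k p else 0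

/-- Plackett–Luce probability of the length-`k` ranking `r` given consideration set `C`. -/
def prPL (n k : ℕ) (u : Fin n → ℝ) (r : Fin k ↪ Fin n) (C : Finset (Fin n)) : ℝ :=
  if ∀ t : Fin k, r t ∈ C then
    ∏ t : Fin k, Real.exp (u (r t)) /
      ∑ j ∈ C \ (Finset.Iio t).image r, Real.exp (u j)
  else 0

/-- Plackett–Luce-with-consideration (PL+C) probability of the ranking `r`. -/
def prPLC (n k : ℕ) (u p : Fin n → ℝ) (r : Fin k ↪ Fin n) : ℝ :=
  ∑ C : Finset (Fin n), prC n k p C * prPL n k u r C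

/-- PL probability of a set of rankings. -/
def prPLset (n k : ℕ) (u : Fin n → ℝ) (R : Finset (Fin k ↪ Fin n)) (C : Finset (Fin n)) : ℝ :=
  ∑ r ∈ R, prPL n k u r C

/-- PL+C probability of a set of rankings. -/
def prPLCset (n k : ℕ) (u p : Fin n → ℝ) (R : Finset (Fin k ↪ Fin n)) : ℝ :=
  ∑ r ∈ R, prPLC n k u p r

/-- `R_{i≤ℓ}`: the set of length-`k` rankings with item `i` among the top `ℓ` positions. -/
def topSet (n k : ℕ) (i : Fin n) (ℓ : ℕ) : Finset (Fin k ↪ Fin n) :=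
  Finset.univ.filter (fun r => ∃ t : Fin k, (t : ℕ) < ℓ ∧ r t = i)

/-! Swapping `i` and `j` in a ranking amounts to swapping their utilities. Suppose `r` ranks `i`
before `j`, and `C` contains both. Swapping the two utilities does not increase the product of the
numerators of `Pr_PL(r | C)`, which is the exponential of the total utility of the ranked items.
Nor does it decrease any denominator: as long as `i` remains, so does `j`, and the sum is unchanged;
once `i` is gone, `j` contributes more until it is ranked itself. If `j` is unranked the numerator
strictly drops; otherwise the denominator at the position of `j` strictly grows. -/

section SwapSums

variable {α M : Type*} [DecidableEq α] {f : α → M} {i j x : α}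

theorem le_apply_swap [Preorder M] (hf : f j ≤ f i) (hx : x ≠ i) :
    f x ≤ f (Equiv.swap i j x) := by
  rcases eq_or_ne x j with rfl | hxj
  · rwa [Equiv.swap_apply_right]
  · rw [Equiv.swap_apply_of_ne_of_ne hx hxj]

theorem swap_mem_iff {A : Finset α} (hi : i ∈ A) (hj : j ∈ A) :
    Equiv.swap i j x ∈ A ↔ x ∈ A := by
  rw [Equiv.swap_apply_def]
  split_ifs with hxi hxj
  · simp only [hj, hxi, hi]
  · simp only [hi, hxj, hj]
  · rfl

theorem sum_comp_swap_of_mem [AddCommMonoid M] {A : Finset α} (hi : i ∈ A) (hj : j ∈ A) :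
    ∑ x ∈ A, f (Equiv.swap i j x) = ∑ x ∈ A, f x :=
  Finset.sum_equiv (Equiv.swap i j) (fun _ => (swap_mem_iff hi hj).symm) fun _ _ => rfl

theorem sum_le_sum_comp_swap [AddCommMonoid M] [Preorder M] [AddLeftMono M] {A : Finset α}
    (hf : f j ≤ f i) (hA : i ∈ A → j ∈ A) :
    ∑ x ∈ A, f x ≤ ∑ x ∈ A, f (Equiv.swap i j x) := by
  by_cases hi : i ∈ A
  · exact (sum_comp_swap_of_mem hi (hA hi)).ge
  · exact Finset.sum_le_sum fun x hx => le_apply_swap hf (ne_of_mem_of_not_mem hx hi)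

variable [AddCommMonoid M] [PartialOrder M] [IsOrderedCancelAddMonoid M]

theorem sum_lt_sum_comp_swap {A : Finset α} (hf : f j < f i) (hi : i ∉ A) (hj : j ∈ A) :
    ∑ x ∈ A, f x < ∑ x ∈ A, f (Equiv.swap i j x) :=
  Finset.sum_lt_sum (fun _ hx => le_apply_swap hf.le (ne_of_mem_of_not_mem hx hi))
    ⟨j, hj, by rwa [Equiv.swap_apply_right]⟩

theorem sum_comp_swap_lt_sum {A : Finset α} (hf : f j < f i) (hi : i ∈ A) (hj : j ∉ A) :
    ∑ x ∈ A, f (Equiv.swap i j x) < ∑ x ∈ A, f x := by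
  simpa only [Function.comp_apply, Equiv.swap_comm j i, Equiv.swap_apply_self] using
    sum_lt_sum_comp_swap (f := f ∘ Equiv.swap i j) (i := j) (j := i)
      (by simpa only [Function.comp_apply, Equiv.swap_apply_left, Equiv.swap_apply_right]) hj hi

end SwapSums

theorem exists_embedding_apply_eq_and_forall_ne {κ α : Type*} [Fintype κ] [Fintype α]
    (hcard : Fintype.card κ < Fintype.card α) (s : κ) {i j : α} (hij : i ≠ j) :
    ∃ r : κ ↪ α, r s = i ∧ ∀ t, r t ≠ j := by
  have hcard' : Fintype.card κ ≤ Fintype.card {x : α // x ≠ j} := by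
    rw [Fintype.card_subtype_compl, Fintype.card_subtype_eq]
    exact Nat.le_sub_one_of_lt hcard
  obtain ⟨e⟩ := Function.Embedding.nonempty_of_card_le hcard'
  refine ⟨(e.setValue s ⟨i, hij⟩).trans (Function.Embedding.subtype _), ?_, fun t => ?_⟩
  · rw [Function.Embedding.trans_apply, Function.Embedding.setValue_eq,
      Function.Embedding.subtype_apply]
  · exact (e.setValue s ⟨i, hij⟩ t).2

section Rankings

variable {α : Type*} {k : ℕ} {r : Fin k ↪ α} {i j : α}

/-- The ranking `r` ranks `i` before `j`: item `i` occurs in `r`, and `j` either occurs at a later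
position or is left unranked. -/
def RanksBefore (r : Fin k ↪ α) (i j : α) : Prop :=
  ∃ s, r s = i ∧ ∀ t, r t = j → s < t

theorem ranksBefore_of_top {ℓ : ℕ} (h : (∃ t : Fin k, (t : ℕ) < ℓ ∧ r t = i) ∧
    ¬∃ t : Fin k, (t : ℕ) < ℓ ∧ r t = j) : RanksBefore r i j := by
  obtain ⟨⟨s, hs, rfl⟩, hj⟩ := h
  refine ⟨s, rfl, fun t ht => ?_⟩
  by_contra! hts
  exact hj ⟨t, lt_of_le_of_lt hts hs, ht⟩

variable [DecidableEq α] {C : Finset α} {t : Fin k}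

/-- The items of `C` still available when position `t` of the ranking `r` is filled; the
denominators of the Plackett–Luce probability are sums over these sets. -/
def remaining (r : Fin k ↪ α) (C : Finset α) (t : Fin k) : Finset α :=
  C \ (Finset.Iio t).image r

theorem mem_remaining {x : α} : x ∈ remaining r C t ↔ x ∈ C ∧ ∀ s < t, r s ≠ x := by
  simp only [remaining, Finset.mem_sdiff, Finset.mem_image, Finset.mem_Iio, not_exists, not_and,
    ne_eq]

theorem apply_mem_remaining (ht : r t ∈ C) : r t ∈ remaining r C t :=
  mem_remaining.2 ⟨ht, fun _ hs => r.injective.ne hs.ne⟩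

theorem RanksBefore.mem_remaining_of_mem (hr : RanksBefore r i j) (hj : j ∈ C)
    (hi : i ∈ remaining r C t) : j ∈ remaining r C t := by
  obtain ⟨s, hs, hsj⟩ := hr
  exact mem_remaining.2
    ⟨hj, fun t' ht' h => (mem_remaining.1 hi).2 s ((hsj t' h).trans ht') hs⟩

theorem RanksBefore.notMem_remaining (hr : RanksBefore r i j) (ht : r t = j) :
    i ∉ remaining r C t := by
  obtain ⟨s, hs, hsj⟩ := hr
  exact fun hi => (mem_remaining.1 hi).2 s (hsj t ht) hs

end Rankings

section PlackettLuce

variable {n k : ℕ} {u : Fin n → ℝ} {r : Fin k ↪ Fin n} {C : Finset (Fin n)} {i j : Fin n}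

theorem prPL_nonneg : 0 ≤ prPL n k u r C := by
  unfold prPL
  split_ifs
  · positivity
  · exact le_rfl

theorem prPL_of_notMem (hr : ¬∀ t, r t ∈ C) : prPL n k u r C = 0 :=
  if_neg hr

theorem prPL_eq_exp_div (hr : ∀ t, r t ∈ C) :
    prPL n k u r C =
      Real.exp (∑ x ∈ Finset.univ.map r, u x) /
        ∏ t, ∑ x ∈ remaining r C t, Real.exp (u x) := by
  rw [prPL, if_pos hr, Finset.prod_div_distrib, Finset.sum_map, Real.exp_sum]
  rfl

theorem prPL_trans_perm (σ : Equiv.Perm (Fin n)) (hσ : ∀ x, σ x ∈ C ↔ x ∈ C) :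
    prPL n k u (r.trans σ.toEmbedding) C = prPL n k (u ∘ σ) r C := by
  have sum_remaining (t : Fin k) :
      ∑ x ∈ C \ (Finset.Iio t).image (r.trans σ.toEmbedding), Real.exp (u x) =
        ∑ x ∈ C \ (Finset.Iio t).image r, Real.exp ((u ∘ σ) x) := by
    refine (Finset.sum_equiv σ (fun x => ?_) fun _ _ => rfl).symm
    simp only [Finset.mem_sdiff, hσ, Finset.mem_image, Function.Embedding.trans_apply,
      Equiv.coe_toEmbedding, EmbeddingLike.apply_eq_iff_eq]
  simp only [prPL, sum_remaining, Function.Embedding.trans_apply, Equiv.coe_toEmbedding, hσ,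
    Function.comp_apply]

theorem sum_exp_remaining_pos {t : Fin k} (ht : r t ∈ C) :
    0 < ∑ x ∈ remaining r C t, Real.exp (u x) :=
  Finset.sum_pos (fun _ _ => Real.exp_pos _) ⟨r t, apply_mem_remaining ht⟩

theorem prPL_comp_swap_lt (hu : u j < u i) (hr : RanksBefore r i j) (hj : j ∈ C)
    (hrC : ∀ t, r t ∈ C) : prPL n k (u ∘ Equiv.swap i j) r C < prPL n k u r C := by
  have hexp : Real.exp (u j) < Real.exp (u i) := Real.exp_lt_exp.2 hu
  have hi_ranked : i ∈ Finset.univ.map r := by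
    obtain ⟨s, hs, -⟩ := hr
    exact Finset.mem_map.2 ⟨s, Finset.mem_univ s, hs⟩
  have denom_factor_pos : ∀ t ∈ Finset.univ, 0 < ∑ x ∈ remaining r C t, Real.exp (u x) :=
    fun t _ => sum_exp_remaining_pos (hrC t)
  have denom_factor_le : ∀ t ∈ Finset.univ, ∑ x ∈ remaining r C t, Real.exp (u x) ≤
      ∑ x ∈ remaining r C t, Real.exp (u (Equiv.swap i j x)) := fun t _ =>
    sum_le_sum_comp_swap (f := fun x => Real.exp (u x)) hexp.le (hr.mem_remaining_of_mem hj)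
  rw [prPL_eq_exp_div hrC, prPL_eq_exp_div hrC]
  simp only [Function.comp_apply]
  by_cases hj_ranked : j ∈ Finset.univ.map r
  · obtain ⟨t, -, ht⟩ := Finset.mem_map.1 hj_ranked
    rw [sum_comp_swap_of_mem hi_ranked hj_ranked]
    have denom_factor_lt : ∑ x ∈ remaining r C t, Real.exp (u x) <
        ∑ x ∈ remaining r C t, Real.exp (u (Equiv.swap i j x)) :=
      sum_lt_sum_comp_swap (f := fun x => Real.exp (u x)) hexp (hr.notMem_remaining ht)
        (ht ▸ apply_mem_remaining (hrC t))
    exact div_lt_div_of_pos_left (Real.exp_pos _) (Finset.prod_pos denom_factor_pos)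
      (Finset.prod_lt_prod denom_factor_pos denom_factor_le ⟨t, Finset.mem_univ t, denom_factor_lt⟩)
  · exact div_lt_div₀ (Real.exp_lt_exp.2 (sum_comp_swap_lt_sum hu hi_ranked hj_ranked))
      (Finset.prod_le_prod (fun t ht => (denom_factor_pos t ht).le) denom_factor_le)
      (Real.exp_pos _).le (Finset.prod_pos denom_factor_pos)

theorem prPL_trans_swap_lt (hu : u j < u i) (hr : RanksBefore r i j) (hi : i ∈ C) (hj : j ∈ C)
    (hrC : ∀ t, r t ∈ C) :
    prPL n k u (r.trans (Equiv.swap i j).toEmbedding) C < prPL n k u r C := by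
  rw [prPL_trans_perm _ fun _ => swap_mem_iff hi hj]
  exact prPL_comp_swap_lt hu hr hj hrC

theorem prPL_trans_swap_le (hu : u j < u i) (hr : RanksBefore r i j) (hi : i ∈ C) (hj : j ∈ C) :
    prPL n k u (r.trans (Equiv.swap i j).toEmbedding) C ≤ prPL n k u r C := by
  by_cases hrC : ∀ t, r t ∈ C
  · exact (prPL_trans_swap_lt hu hr hi hj hrC).le
  · rw [prPL_trans_perm _ fun _ => swap_mem_iff hi hj, prPL_of_notMem hrC]
    exact prPL_nonneg

end PlackettLuce

section Consideration

variable {n k : ℕ} {p : Fin n → ℝ}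

theorem considerWeight_nonneg (hp : ∀ a, 0 ≤ p a ∧ p a ≤ 1) (C : Finset (Fin n)) :
    0 ≤ considerWeight n p C :=
  mul_nonneg (Finset.prod_nonneg fun a _ => (hp a).1)
    (Finset.prod_nonneg fun a _ => sub_nonneg.2 (hp a).2)

theorem considerWeight_univ_pos (hp : ∀ a, 0 < p a) : 0 < considerWeight n p Finset.univ := by
  simpa only [considerWeight, Finset.compl_univ, Finset.prod_empty, mul_one] using
    Finset.prod_pos fun a _ => hp a

theorem prC_nonneg (hp : ∀ a, 0 ≤ p a ∧ p a ≤ 1) (C : Finset (Fin n)) : 0 ≤ prC n k p C := by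
  unfold prC
  split_ifs
  · exact div_nonneg (considerWeight_nonneg hp C)
      (Finset.sum_nonneg fun D _ => considerWeight_nonneg hp D)
  · exact le_rfl

theorem prC_univ_pos (hp : ∀ a, 0 < p a ∧ p a ≤ 1) (hkn : k ≤ n) :
    0 < prC n k p Finset.univ := by
  have hcard : k ≤ (Finset.univ : Finset (Fin n)).card := by rwa [Finset.card_fin]
  have hpos : 0 < considerWeight n p Finset.univ := considerWeight_univ_pos fun a => (hp a).1
  have hz : 0 < zConst n k p :=
    Finset.sum_pos' (fun C _ => considerWeight_nonneg (fun a => ⟨(hp a).1.le, (hp a).2⟩) C)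
      ⟨Finset.univ, Finset.mem_filter.2 ⟨Finset.mem_univ _, hcard⟩, hpos⟩
  rw [prC, if_pos hcard]
  exact div_pos hpos hz

end Consideration

theorem sum_replace_strict_general {n k : ℕ} {u : Fin n → ℝ} {i j : Fin n}
    {w : Finset (Fin n) → ℝ} {R : Finset (Fin k ↪ Fin n)}
    (hu : u j < u i) (hw : ∀ C, 0 ≤ w C) (hR : ∀ r ∈ R, RanksBefore r i j)
    (hsupp : ∃ r ∈ R, ∃ C, (i ∈ C ∧ j ∈ C) ∧ (∀ t, r t ∈ C) ∧ 0 < w C) :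
    ∑ r ∈ R, ∑ C ∈ Finset.univ.filter (fun C : Finset (Fin n) => i ∈ C ∧ j ∈ C),
        w C * prPL n k u (r.trans (Equiv.swap i j).toEmbedding) C <
      ∑ r ∈ R, ∑ C ∈ Finset.univ.filter (fun C : Finset (Fin n) => i ∈ C ∧ j ∈ C),
        w C * prPL n k u r C := by
  have term_le : ∀ r ∈ R,
      ∀ C ∈ Finset.univ.filter (fun C : Finset (Fin n) => i ∈ C ∧ j ∈ C),
        w C * prPL n k u (r.trans (Equiv.swap i j).toEmbedding) C ≤ w C * prPL n k u r C := by
    intro r hr C hC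
    obtain ⟨hi, hj⟩ := (Finset.mem_filter.1 hC).2
    exact mul_le_mul_of_nonneg_left (prPL_trans_swap_le hu (hR r hr) hi hj) (hw C)
  obtain ⟨r, hr, C, hC, hrC, hwC⟩ := hsupp
  have term_lt :
      w C * prPL n k u (r.trans (Equiv.swap i j).toEmbedding) C < w C * prPL n k u r C :=
    mul_lt_mul_of_pos_left (prPL_trans_swap_lt hu (hR r hr) hC.1 hC.2 hrC) hwC
  exact Finset.sum_lt_sum (fun r hr => Finset.sum_le_sum (term_le r hr))
    ⟨r, hr, Finset.sum_lt_sum (term_le r hr)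
      ⟨C, Finset.mem_filter.2 ⟨Finset.mem_univ C, hC⟩, term_lt⟩⟩

/-- summing over rankings with `i` but not `j` in the top `ℓ` positions, and
over consideration sets containing both `i` and `j`, the total PL+C mass of the rankings
strictly exceeds that of the rankings with `i` replaced by `j`. -/
theorem sum_replace_strict (n k ℓ : ℕ) (u p : Fin n → ℝ) (i j : Fin n)
    (hp : ∀ a, 0 < p a ∧ p a ≤ 1) (hu : u i > u j) (hij : i ≠ j)
    (hℓ : 1 ≤ ℓ) (hℓk : ℓ ≤ k) (hkn : k < n) :
    ∑ r ∈ Finset.univ.filter (fun r : Fin k ↪ Fin n =>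
        (∃ t : Fin k, (t : ℕ) < ℓ ∧ r t = i) ∧ ¬∃ t : Fin k, (t : ℕ) < ℓ ∧ r t = j),
      ∑ C ∈ Finset.univ.filter (fun C : Finset (Fin n) => i ∈ C ∧ j ∈ C),
        prC n k p C * prPL n k u r C
    >
    ∑ r ∈ Finset.univ.filter (fun r : Fin k ↪ Fin n =>
        (∃ t : Fin k, (t : ℕ) < ℓ ∧ r t = i) ∧ ¬∃ t : Fin k, (t : ℕ) < ℓ ∧ r t = j),
      ∑ C ∈ Finset.univ.filter (fun C : Finset (Fin n) => i ∈ C ∧ j ∈ C),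
        prC n k p C * prPL n k u (r.trans (Equiv.swap i j).toEmbedding) C := by
  obtain ⟨r, hri, hrj⟩ := exists_embedding_apply_eq_and_forall_ne
    (by simpa only [Fintype.card_fin]) (⟨0, hℓ.trans hℓk⟩ : Fin k) hij
  exact sum_replace_strict_general hu (prC_nonneg fun a => ⟨(hp a).1.le, (hp a).2⟩)
    (fun _ hr => ranksBefore_of_top (Finset.mem_filter.1 hr).2)
    ⟨r, Finset.mem_filter.2 ⟨Finset.mem_univ r, ⟨⟨0, _⟩, hℓ, hri⟩,
      fun ⟨t, _, ht⟩ => hrj t ht⟩,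
      Finset.univ, ⟨Finset.mem_univ i, Finset.mem_univ j⟩, fun _ => Finset.mem_univ _,
      prC_univ_pos hp hkn.le⟩
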